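/- Existence of a low-sensitivity coordinate: let A be a randomized map from subsets of {0,1}^n of size ≤ t to {0,1}^{εt}. Then for every t-element set e ⊆ {0,1}^n there exists v ∈ e such that d(A(U_{2^e} ∖ {v}), A(U_{2^e} ∪ {v})) ≤ √(2 ln 2 · ε), where U_{2^e} is the uniform distribution over subsets of e. -/

import Mathlib

open Finset

/-- Statistical distance: half the ℓ1-distance of probability mass functions. -/
noncomputable def statDist {Ω : Type*} [Fintype Ω] (p q : Ω → ℝ) : ℝ :=
  (1 / 2) * ∑ ω, |p ω - q ω|

/-- The distribution of `A(U_{2^e} ∖ {v})`: a uniform subset of `e` with `v`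
removed, fed to the randomized mapping `A` with uniform seed in `R`. -/
noncomputable def eraseDist {n : ℕ} {W R : Type*} [Fintype W] [Fintype R] [DecidableEq W]
    (A : Finset (Fin n → Bool) → R → W) (e : Finset (Fin n → Bool))
    (v : Fin n → Bool) (z : W) : ℝ :=
  ∑ s ∈ e.powerset, ∑ r,
    ((1 : ℝ) / 2 ^ e.card) * (1 / (Fintype.card R : ℝ)) *
      (if A (s.erase v) r = z then 1 else 0)

/-- The distribution of `A(U_{2^e} ∪ {v})`: a uniform subset of `e` with `v`
added, fed to the randomized mapping `A` with uniform seed in `R`. -/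
noncomputable def insertDist {n : ℕ} {W R : Type*} [Fintype W] [Fintype R] [DecidableEq W]
    (A : Finset (Fin n → Bool) → R → W) (e : Finset (Fin n → Bool))
    (v : Fin n → Bool) (z : W) : ℝ :=
  ∑ s ∈ e.powerset, ∑ r,
    ((1 : ℝ) / 2 ^ e.card) * (1 / (Fintype.card R : ℝ)) *
      (if A (insert v s) r = z then 1 else 0)

/-- The indicator vector of `s` at `v`, in the sign convention. -/
noncomputable def coordSign {α : Type*} [DecidableEq α] (v : α) (s : Finset α) : ℝ :=
  if v ∈ s then -1 else 1

/-- Conditioning on the two values of a coordinate is correlating with that coordinate. -/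
theorem sum_erase_sub_sum_insert {α : Type*} [DecidableEq α] (e : Finset α) {v : α}
    (hv : v ∈ e) (F : Finset α → ℝ) :
    ∑ s ∈ e.powerset, F (s.erase v) - ∑ s ∈ e.powerset, F (insert v s)
      = 2 * ∑ s ∈ e.powerset, coordSign v s * F s := by
  obtain ⟨e', hve', rfl⟩ : ∃ e', v ∉ e' ∧ insert v e' = e :=
    ⟨e.erase v, notMem_erase v e, insert_erase hv⟩
  have hmem : ∀ s ∈ e'.powerset, v ∉ s := fun s hs h => hve' (mem_powerset.1 hs h)
  simp only [sum_powerset_insert hve']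
  have h1 : ∑ s ∈ e'.powerset, F (s.erase v) = ∑ s ∈ e'.powerset, F s :=
    sum_congr rfl fun s hs => by rw [erase_eq_of_notMem (hmem s hs)]
  have h2 : ∑ s ∈ e'.powerset, F ((insert v s).erase v) = ∑ s ∈ e'.powerset, F s :=
    sum_congr rfl fun s hs => by rw [erase_insert (hmem s hs)]
  have h3 : ∑ s ∈ e'.powerset, coordSign v s * F s = ∑ s ∈ e'.powerset, F s :=
    sum_congr rfl fun s hs => by simp [coordSign, hmem s hs]
  have h4 : ∑ s ∈ e'.powerset, coordSign v (insert v s) * F (insert v s)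
      = -∑ s ∈ e'.powerset, F (insert v s) := by
    simp [coordSign]
  simp only [insert_idem, h1, h2, h3, h4]
  ring

/-- Moment generating function bound for a signed sum of uniform signs. -/
theorem sum_powerset_exp_le {α : Type*} [DecidableEq α] (e : Finset α) (a : α → ℝ)
    (ha : ∀ v, a v ^ 2 = 1) (l : ℝ) :
    ∑ s ∈ e.powerset, Real.exp (l * ∑ v ∈ e, a v * coordSign v s)
      ≤ 2 ^ e.card * Real.exp (e.card * (l ^ 2 / 2)) := by
  have h : ∀ s ∈ e.powerset, Real.exp (l * ∑ v ∈ e, a v * coordSign v s)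
      = (∏ v ∈ s, Real.exp (-(l * a v))) * ∏ v ∈ e \ s, Real.exp (l * a v) := by
    intro s hs
    rw [mul_sum, Real.exp_sum, ← prod_sdiff (mem_powerset.1 hs), mul_comm]
    congr 1
    · exact prod_congr rfl fun v hv => by simp [coordSign, hv]
    · exact prod_congr rfl fun v hv => by simp [coordSign, (mem_sdiff.1 hv).2]
  rw [sum_congr rfl h, ← prod_add, Real.exp_nat_mul, ← mul_pow, ← prod_const]
  refine prod_le_prod (fun v _ => by positivity) fun v _ => ?_
  have h1 := Real.cosh_le_exp_half_sq (l * a v)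
  rw [mul_pow, ha, mul_one, Real.cosh_eq] at h1
  linarith

/-- The total correlation of a channel with few outputs with the individual coordinates
of a uniform subset of `e` is small. -/
theorem sum_abs_correlation_le {α W : Type*} [DecidableEq α] [Fintype W] (e : Finset α)
    (F : W → Finset α → ℝ) (hF0 : ∀ z s, 0 ≤ F z s) (hF1 : ∀ z s, F z s ≤ 1 / 2 ^ e.card)
    (hF : ∑ z, ∑ s ∈ e.powerset, F z s = 1) {l : ℝ} (hl : 0 < l)
    (hW : (Fintype.card W : ℝ) ≤ Real.exp (e.card * (l ^ 2 / 2))) :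
    ∑ v ∈ e, ∑ z, |∑ s ∈ e.powerset, coordSign v s * F z s| ≤ e.card * l := by
  set a : W → α → ℝ := fun z v =>
    if 0 ≤ ∑ s ∈ e.powerset, coordSign v s * F z s then 1 else -1 with ha_def
  have ha : ∀ z v, a z v ^ 2 = 1 := by
    intro z v
    simp only [ha_def]
    split_ifs <;> norm_num
  have habs : ∀ z v, |∑ s ∈ e.powerset, coordSign v s * F z s|
      = a z v * ∑ s ∈ e.powerset, coordSign v s * F z s := by
    intro z v
    simp only [ha_def]
    split_ifs with h
    · rw [abs_of_nonneg h, one_mul]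
    · rw [abs_of_neg (not_le.1 h), neg_one_mul]
  set X : W → Finset α → ℝ := fun z s => l * ∑ v ∈ e, a z v * coordSign v s with hX
  set c : ℝ := e.card * l ^ 2 with hc
  have hsum : l * ∑ v ∈ e, ∑ z, |∑ s ∈ e.powerset, coordSign v s * F z s|
      = ∑ z, ∑ s ∈ e.powerset, F z s * X z s := by
    simp only [habs, hX]
    rw [sum_comm, mul_sum]
    refine sum_congr rfl fun z _ => ?_
    simp only [mul_sum]
    rw [sum_comm]
    exact sum_congr rfl fun s _ => sum_congr rfl fun v _ => by ring
  have hpoint : ∀ z s, F z s * X z s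
      ≤ 1 / 2 ^ e.card * Real.exp (-c) * Real.exp (X z s) + (c - 1) * F z s := by
    intro z s
    have h1 := mul_le_mul_of_nonneg_left (Real.add_one_le_exp (-c + X z s)) (hF0 z s)
    have h2 := mul_le_mul_of_nonneg_right (hF1 z s) (Real.exp_pos (-c + X z s)).le
    rw [mul_assoc, ← Real.exp_add]
    linarith
  have hexp : ∑ z, ∑ s ∈ e.powerset, 1 / 2 ^ e.card * Real.exp (-c) * Real.exp (X z s) ≤ 1 := by
    calc ∑ z, ∑ s ∈ e.powerset, 1 / 2 ^ e.card * Real.exp (-c) * Real.exp (X z s)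
        ≤ ∑ _z : W, Real.exp (-c) * Real.exp (e.card * (l ^ 2 / 2)) := by
          refine sum_le_sum fun z _ => ?_
          rw [← mul_sum]
          refine (mul_le_mul_of_nonneg_left (sum_powerset_exp_le e (a z) (ha z) l)
            (by positivity)).trans_eq ?_
          field_simp
      _ = Fintype.card W * (Real.exp (-c) * Real.exp (e.card * (l ^ 2 / 2))) := by
          simp
      _ ≤ Real.exp (e.card * (l ^ 2 / 2)) *
            (Real.exp (-c) * Real.exp (e.card * (l ^ 2 / 2))) := by gcongr
      _ = 1 := by
          rw [← Real.exp_add, ← Real.exp_add, Real.exp_eq_one_iff, hc]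
          ring
  have htotal : ∑ z, ∑ s ∈ e.powerset, F z s * X z s ≤ c := by
    refine (sum_le_sum fun z _ => sum_le_sum fun s _ => hpoint z s).trans ?_
    simp only [sum_add_distrib]
    rw [← sum_congr rfl fun z _ => mul_sum e.powerset (F z) (c - 1), ← mul_sum, hF]
    linarith
  rw [← hsum, hc] at htotal
  refine le_of_mul_le_mul_left (htotal.trans_eq ?_) hl
  ring

/-- Existence of a low-sensitivity coordinate.  If `A` is a
randomized map from subsets of `{0,1}^n` of size `≤ t` to a range of size at
most `2^{εt}`, then every `t`-element set `e ⊆ {0,1}^n` contains some `v` with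
`d(A(U_{2^e} ∖ {v}), A(U_{2^e} ∪ {v})) ≤ √(2 ln 2 · ε)`. -/
theorem exists_low_sensitivity_element {n : ℕ} {W R : Type*} [Fintype W] [Fintype R]
    [DecidableEq W] [Nonempty R]
    (t : ℕ) (ht : 0 < t) (ε : ℝ) (hε : 0 < ε)
    (A : Finset (Fin n → Bool) → R → W)
    (hW : (Fintype.card W : ℝ) ≤ 2 ^ (ε * t))
    (e : Finset (Fin n → Bool)) (he : e.card = t) :
    ∃ v ∈ e, statDist (eraseDist A e v) (insertDist A e v)
      ≤ Real.sqrt (2 * Real.log 2 * ε) := by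
  set F : W → Finset (Fin n → Bool) → ℝ := fun z s => ∑ r,
    ((1 : ℝ) / 2 ^ e.card) * (1 / (Fintype.card R : ℝ)) *
      (if A s r = z then 1 else 0) with hF
  have hR : (Fintype.card R : ℝ) ≠ 0 := Nat.cast_ne_zero.2 Fintype.card_ne_zero
  have hdist : ∀ v ∈ e, statDist (eraseDist A e v) (insertDist A e v)
      = ∑ z, |∑ s ∈ e.powerset, coordSign v s * F z s| := by
    intro v hv
    rw [statDist, mul_sum]
    refine sum_congr rfl fun z _ => ?_
    have h := sum_erase_sub_sum_insert e hv (F z)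
    change eraseDist A e v z - insertDist A e v z = _ at h
    rw [h, abs_mul, abs_two]
    ring
  have hF0 : ∀ z s, 0 ≤ F z s := fun z s => sum_nonneg fun r _ => by positivity
  have hFsum : ∀ s, ∑ z, F z s = 1 / 2 ^ e.card := by
    intro s
    simp only [hF]
    rw [sum_comm]
    simp only [← mul_sum, sum_ite_eq, mem_univ, if_true, sum_const, card_univ, nsmul_eq_mul]
    field_simp
  have hF1 : ∀ z s, F z s ≤ 1 / 2 ^ e.card := fun z s =>
    (single_le_sum (fun z _ => hF0 z s) (mem_univ z)).trans_eq (hFsum s)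
  have hFtotal : ∑ z, ∑ s ∈ e.powerset, F z s = 1 := by
    rw [sum_comm]
    simp [hFsum, card_powerset]
  have hlog : 0 < 2 * Real.log 2 * ε := by
    have := Real.log_pos one_lt_two
    positivity
  have hcard : (Fintype.card W : ℝ)
      ≤ Real.exp (e.card * (Real.sqrt (2 * Real.log 2 * ε) ^ 2 / 2)) := by
    rw [Real.sq_sqrt hlog.le, he]
    refine hW.trans_eq ?_
    rw [Real.rpow_def_of_pos two_pos]
    congr 1
    ring
  have hmain := sum_abs_correlation_le e F hF0 hF1 hFtotal (Real.sqrt_pos.2 hlog) hcard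
  rw [← sum_congr rfl hdist, ← nsmul_eq_mul, ← sum_const] at hmain
  exact exists_le_of_sum_le (card_pos.1 (he ▸ ht)) hmain
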